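/- Let 1 ≤ p ≤ ∞ and n, m ≥ 1. For every linear map u : M_n → M_m, the regular norm of u relative to p equals the norm of u as a linear functional on (M_n ⊗ M_m, ρ_p) under the trace pairing: ‖u‖_r = sup{ |T((u ⊗ id_{M_m})(a))| : a ∈ M_n ⊗ M_m, ρ_p(a) ≤ 1 }. (Theorem 3.2: (X_p^{nm})^* = B_r(S_p^n, S_p^m) isometrically.) -/

import Mathlib

open scoped Kronecker ENNReal Classical ComplexOrder
open Matrix

noncomputable section

/-- The operator norm (`S_∞` norm) of a complex matrix, acting on Euclidean space. -/
def opNorm {ι : Type} [Fintype ι] [DecidableEq ι] (a : Matrix ι ι ℂ) : ℝ :=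
  ‖LinearMap.toContinuousLinearMap (Matrix.toEuclideanLin a)‖

/-- The Schatten `p`-norm of a complex matrix: the `ℓ^p` norm of its singular values
(the square roots of the eigenvalues of `aᴴ * a`); for `p = ∞` it is the operator norm. -/
def schattenNorm {ι : Type} [Fintype ι] [DecidableEq ι] (p : ℝ≥0∞) (a : Matrix ι ι ℂ) : ℝ :=
  if p = ∞ then opNorm a
  else (∑ i, Real.sqrt ((Matrix.posSemidef_conjTranspose_mul_self a).isHermitian.eigenvalues i) ^ p.toReal)
      ^ (1 / p.toReal)

/-- Pisier's vector-valued Schatten norm `‖x‖_{S_p^N[M_n]}` on `M_N ⊗ M_n`: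
the infimum of `‖a‖_{S_{2p}} ‖y‖_{S_∞} ‖b‖_{S_{2p}}` over factorizations
`x = (a ⊗ 1) · y · (b ⊗ 1)`. -/
def pisierNorm (p : ℝ≥0∞) {N n : ℕ} (x : Matrix (Fin N × Fin n) (Fin N × Fin n) ℂ) : ℝ :=
  sInf { r | ∃ (a b : Matrix (Fin N) (Fin N) ℂ)
      (y : Matrix (Fin N × Fin n) (Fin N × Fin n) ℂ),
      x = (a ⊗ₖ (1 : Matrix (Fin n) (Fin n) ℂ)) * y * (b ⊗ₖ (1 : Matrix (Fin n) (Fin n) ℂ)) ∧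
      r = schattenNorm (2 * p) a * opNorm y * schattenNorm (2 * p) b }

/-- The amplification `u ⊗ id_{M_n} : M_N ⊗ M_n → M_m ⊗ M_n` of a map `u : M_N → M_m`,
acting as `u` on each `M_n`-block entry. -/
def amp {N m n : ℕ} (u : Matrix (Fin N) (Fin N) ℂ → Matrix (Fin m) (Fin m) ℂ)
    (x : Matrix (Fin N × Fin n) (Fin N × Fin n) ℂ) : Matrix (Fin m × Fin n) (Fin m × Fin n) ℂ :=
  Matrix.of fun ik jl => u (Matrix.of fun i j => x (i, ik.2) (j, jl.2)) ik.1 jl.1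

/-- The amplification `id_{M_n} ⊗ u : M_n ⊗ M_N → M_n ⊗ M_m` of a map `u : M_N → M_m`. -/
def ampLeft {n N m : ℕ} (u : Matrix (Fin N) (Fin N) ℂ → Matrix (Fin m) (Fin m) ℂ)
    (x : Matrix (Fin n × Fin N) (Fin n × Fin N) ℂ) : Matrix (Fin n × Fin m) (Fin n × Fin m) ℂ :=
  Matrix.of fun ki lj => u (Matrix.of fun i j => x (ki.1, i) (lj.1, j)) ki.2 lj.2

/-- The trace pairing `T : M_k ⊗ M_k → ℂ`, with `T(a ⊗ b) = tr(ᵗa·b)`; writing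
`z` as a `k×k` matrix of blocks `z_{ij} ∈ M_k`, `T(z) = Σ_{i,j} (z_{ij})_{ij}`. -/
def tracePair {k : ℕ} (z : Matrix (Fin k × Fin k) (Fin k × Fin k) ℂ) : ℂ :=
  ∑ i : Fin k, ∑ j : Fin k, z (i, i) (j, j)

/-- A map `u : M_N → M_m` is completely positive if all its amplifications
`id_{M_n} ⊗ u` preserve positive semidefiniteness. -/
def CompletelyPositive {N m : ℕ}
    (u : Matrix (Fin N) (Fin N) ℂ → Matrix (Fin m) (Fin m) ℂ) : Prop :=
  ∀ (n : ℕ) (x : Matrix (Fin n × Fin N) (Fin n × Fin N) ℂ),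
    x.PosSemidef → (ampLeft u x).PosSemidef

/-- The regular norm (relative to `p`) of `u : M_N → M_m`: the supremum in `[0,∞]`
over `n ≥ 1` of the norms of the amplifications `u ⊗ id_{M_n}` from
`(M_N ⊗ M_n, ‖·‖_{S_p^N[M_n]})` to `(M_m ⊗ M_n, ‖·‖_{S_p^m[M_n]})`. -/
def regNorm (p : ℝ≥0∞) {N m : ℕ}
    (u : Matrix (Fin N) (Fin N) ℂ → Matrix (Fin m) (Fin m) ℂ) : ℝ≥0∞ :=
  ⨆ (n : ℕ) (x : Matrix (Fin N × Fin (n + 1)) (Fin N × Fin (n + 1)) ℂ)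
    (_ : pisierNorm p x ≤ 1), ENNReal.ofReal (pisierNorm p (amp u x))

/-- Pisier's norm `ρ_p` on `M_n ⊗ M_m` (with `q` the conjugate exponent `p'`):
the infimum of `‖γ‖_{S_{2p}} ‖α‖_{S_{2p'}} ‖g‖_{S_∞} ‖δ‖_{S_{2p}} ‖β‖_{S_{2p'}}`
over factorizations `a = (γ ⊗ α) · g · (δ ⊗ β)`. -/
def rho (p q : ℝ≥0∞) {n m : ℕ} (a : Matrix (Fin n × Fin m) (Fin n × Fin m) ℂ) : ℝ :=
  sInf { r | ∃ (γ δ : Matrix (Fin n) (Fin n) ℂ) (α β : Matrix (Fin m) (Fin m) ℂ)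
      (g : Matrix (Fin n × Fin m) (Fin n × Fin m) ℂ),
      a = (γ ⊗ₖ α) * g * (δ ⊗ₖ β) ∧
      r = schattenNorm (2 * p) γ * schattenNorm (2 * q) α * opNorm g *
          schattenNorm (2 * p) δ * schattenNorm (2 * q) β }

/-- The amplification `u ⊗ id_{M_n}` of a map `u` defined only on a subspace `S ⊆ M_N`,
applied to an element of `M_N ⊗ M_n` all of whose `M_N`-valued block entries lie in `S`. -/
def ampOn {N m n : ℕ} (S : Submodule ℂ (Matrix (Fin N) (Fin N) ℂ))
    (u : S →ₗ[ℂ] Matrix (Fin m) (Fin m) ℂ)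
    (x : Matrix (Fin N × Fin n) (Fin N × Fin n) ℂ)
    (h : ∀ k l : Fin n, (Matrix.of fun i j => x (i, k) (j, l)) ∈ S) :
    Matrix (Fin m × Fin n) (Fin m × Fin n) ℂ :=
  Matrix.of fun ik jl => u ⟨Matrix.of fun i j => x (i, ik.2) (j, jl.2), h ik.2 jl.2⟩ ik.1 jl.1

end

noncomputable section RegularNorm

section VectorNorm

variable {ι : Type} [Fintype ι]

/-- The `ℓ^p` norm of a nonnegative vector. -/
def vecNorm (p : ℝ≥0∞) (v : ι → ℝ) : ℝ :=
  if p = ∞ then ‖v‖ else (∑ i, v i ^ p.toReal) ^ (1 / p.toReal)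

lemma vecNorm_top (v : ι → ℝ) : vecNorm ∞ v = ‖v‖ := if_pos rfl

lemma vecNorm_of_ne_top {p : ℝ≥0∞} (hp : p ≠ ∞) (v : ι → ℝ) :
    vecNorm p v = (∑ i, v i ^ p.toReal) ^ (1 / p.toReal) := if_neg hp

lemma vecNorm_one (v : ι → ℝ) : vecNorm 1 v = ∑ i, v i := by
  simp [vecNorm_of_ne_top]

lemma eq_one_of_inv_add_inv_top {q : ℝ≥0∞} (h : (∞ : ℝ≥0∞)⁻¹ + q⁻¹ = 1) : q = 1 := by
  simpa using h

lemma holderConjugate_toReal {p q : ℝ≥0∞} (h : p⁻¹ + q⁻¹ = 1) (hp : p ≠ ∞) (hq : q ≠ ∞) :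
    p.toReal.HolderConjugate q.toReal := by
  have hp0 : p ≠ 0 := by rintro rfl; simp at h
  have hq0 : q ≠ 0 := by rintro rfl; simp at h
  have h1 : p.toReal⁻¹ + q.toReal⁻¹ = 1 := by
    rw [← ENNReal.toReal_inv, ← ENNReal.toReal_inv, ← ENNReal.toReal_add (by simpa) (by simpa), h]
    simp
  refine Real.holderConjugate_iff.2 ⟨?_, h1⟩
  have hqpos : 0 < q.toReal⁻¹ := inv_pos.2 (ENNReal.toReal_pos hq0 hq)
  have hppos : 0 < p.toReal := ENNReal.toReal_pos hp0 hp
  exact (inv_lt_one₀ hppos).1 (by linarith)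

/-- Hölder's inequality weighted by a doubly stochastic matrix. -/
lemma sum_doublyStochastic_le {p q : ℝ≥0∞} (h : p⁻¹ + q⁻¹ = 1) {v w : ι → ℝ}
    (hv : ∀ i, 0 ≤ v i) (hw : ∀ i, 0 ≤ w i) (d : ι → ι → ℝ) (hd : ∀ i j, 0 ≤ d i j)
    (hrow : ∀ i, ∑ j, d i j = 1) (hcol : ∀ j, ∑ i, d i j = 1) :
    ∑ i, ∑ j, d i j * (v i * w j) ≤ vecNorm p v * vecNorm q w := by
  have key : ∀ (v w : ι → ℝ) (d : ι → ι → ℝ), (∀ i, 0 ≤ w i) → (∀ i j, 0 ≤ d i j) →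
      (∀ j, ∑ i, d i j = 1) →
      ∑ i, ∑ j, d i j * (v i * w j) ≤ vecNorm ∞ v * vecNorm 1 w := by
    intro v w d hw hd hcol
    rw [vecNorm_top, vecNorm_one]
    calc ∑ i, ∑ j, d i j * (v i * w j) ≤ ∑ i, ∑ j, d i j * (‖v‖ * w j) := by
          gcongr with i _ j _
          · exact hd i j
          · exact hw j
          · exact (le_abs_self _).trans (norm_le_pi_norm v i)
      _ = ∑ j, (∑ i, d i j) * (‖v‖ * w j) := by
          rw [Finset.sum_comm]; simp_rw [Finset.sum_mul]
      _ = ‖v‖ * ∑ j, w j := by simp [hcol, Finset.mul_sum]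
  by_cases hp : p = ∞
  · subst hp
    obtain rfl := eq_one_of_inv_add_inv_top h
    exact key v w d hw hd hcol
  by_cases hq : q = ∞
  · subst hq
    obtain rfl := eq_one_of_inv_add_inv_top (by rwa [add_comm] at h)
    have := key w v (fun i j => d j i) hv (fun i j => hd j i) hrow
    rw [Finset.sum_comm, mul_comm]
    simpa only [mul_comm (w _)] using this
  have hpq := holderConjugate_toReal h hp hq
  have hpos := hpq.pos
  have hpos' := hpq.symm.pos
  rw [vecNorm_of_ne_top hp, vecNorm_of_ne_top hq]
  have hH := Real.inner_le_Lp_mul_Lq_of_nonneg (s := (Finset.univ : Finset (ι × ι)))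
    (f := fun x => d x.1 x.2 ^ (1 / p.toReal) * v x.1)
    (g := fun x => d x.1 x.2 ^ (1 / q.toReal) * w x.2) hpq
    (fun x _ => mul_nonneg (Real.rpow_nonneg (hd _ _) _) (hv _))
    (fun x _ => mul_nonneg (Real.rpow_nonneg (hd _ _) _) (hw _))
  have hl : ∀ i j, d i j ^ (1 / p.toReal) * v i * (d i j ^ (1 / q.toReal) * w j)
      = d i j * (v i * w j) := by
    intro i j
    have : d i j ^ (1 / p.toReal) * d i j ^ (1 / q.toReal) = d i j := by
      rw [← Real.rpow_add_of_nonneg (hd i j) (by positivity) (by positivity), one_div, one_div,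
        hpq.inv_add_inv_eq_one, Real.rpow_one]
    calc _ = (d i j ^ (1 / p.toReal) * d i j ^ (1 / q.toReal)) * (v i * w j) := by ring
      _ = _ := by rw [this]
  have hr : ∀ (t : ℝ) (_ : 0 < t) (x y : ℝ), 0 ≤ x → 0 ≤ y →
      (x ^ (1 / t) * y) ^ t = x * y ^ t := by
    intro t ht x y hx hy
    rw [Real.mul_rpow (Real.rpow_nonneg hx _) hy, ← Real.rpow_mul hx, one_div,
      inv_mul_cancel₀ ht.ne', Real.rpow_one]
  simp only [Fintype.sum_prod_type, hl] at hH
  refine hH.trans_eq ?_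
  congr 2
  · refine Finset.sum_congr rfl fun i _ => ?_
    simp_rw [hr _ hpos _ _ (hd i _) (hv i), ← Finset.sum_mul, hrow, one_mul]
  · rw [Finset.sum_comm]
    refine Finset.sum_congr rfl fun j _ => ?_
    simp_rw [fun i => hr _ hpos' _ _ (hd i j) (hw j), ← Finset.sum_mul, hcol, one_mul]

/-- The `ℓ^p` norm is attained against the unit ball of `ℓ^q`. -/
lemma exists_vecNorm_eq_sum {p q : ℝ≥0∞} (h : p⁻¹ + q⁻¹ = 1) {v : ι → ℝ} (hv : ∀ i, 0 ≤ v i) :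
    ∃ w : ι → ℝ, (∀ i, 0 ≤ w i) ∧ vecNorm q w ≤ 1 ∧ ∑ i, v i * w i = vecNorm p v := by
  classical
  by_cases hp : p = ∞
  · subst hp
    obtain rfl := eq_one_of_inv_add_inv_top h
    rw [vecNorm_top]
    rcases isEmpty_or_nonempty ι with hι | hι
    · exact ⟨0, by simp, by simp [vecNorm_one], by simp [Subsingleton.elim v 0]⟩
    obtain ⟨i, hmax⟩ := Finite.exists_max fun i => ‖v i‖
    have hi : ‖v i‖ = ‖v‖ := le_antisymm (norm_le_pi_norm v i)
      ((pi_norm_le_iff_of_nonneg (norm_nonneg _)).2 hmax)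
    refine ⟨Pi.single i 1, fun j => ?_, ?_, ?_⟩
    · by_cases hj : j = i
      · subst hj; simp
      · simp [hj]
    · simp [vecNorm_one]
    · rw [← hi, Real.norm_of_nonneg (hv i)]
      simp [Pi.single_apply]
  by_cases hq : q = ∞
  · subst hq
    obtain rfl := eq_one_of_inv_add_inv_top (by rwa [add_comm] at h)
    refine ⟨fun _ => 1, by simp, ?_, by simp [vecNorm_one]⟩
    rw [vecNorm_top]
    exact (pi_norm_le_iff_of_nonneg zero_le_one).2 (by simp)
  have hpq := holderConjugate_toReal h hp hq
  lift v to ι → NNReal using hv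
  obtain ⟨w, hw, hvw⟩ := (NNReal.isGreatest_Lp Finset.univ v hpq).1
  refine ⟨fun i => w i, fun i => (w i).2, ?_, ?_⟩
  · rw [vecNorm_of_ne_top hq]
    have hw' : ∑ i, (w i : ℝ) ^ q.toReal ≤ 1 := by exact_mod_cast hw
    exact Real.rpow_le_one (Finset.sum_nonneg fun i _ => Real.rpow_nonneg (w i).2 _) hw'
      (by have := hpq.symm.pos; positivity)
  · rw [vecNorm_of_ne_top hp]
    have hvw' := congrArg NNReal.toReal hvw
    push_cast at hvw' ⊢
    exact hvw'

lemma vecNorm_eq_of_map_eq (p : ℝ≥0∞) {v w : ι → ℝ}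
    (h : Multiset.map v Finset.univ.val = Multiset.map w Finset.univ.val) :
    vecNorm p v = vecNorm p w := by
  have key : ∀ v w : ι → ℝ, Multiset.map v Finset.univ.val = Multiset.map w Finset.univ.val →
      ‖v‖ ≤ ‖w‖ := fun v w h => by
    refine (pi_norm_le_iff_of_nonneg (norm_nonneg _)).2 fun i => ?_
    have hi : v i ∈ Multiset.map w Finset.univ.val :=
      h ▸ Multiset.mem_map_of_mem v (Finset.mem_univ i)
    obtain ⟨j, -, hj⟩ := Multiset.mem_map.1 hi
    exact hj ▸ norm_le_pi_norm w j
  unfold vecNorm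
  split_ifs
  · exact le_antisymm (key v w h) (key w v h.symm)
  · have := congrArg (fun s => (Multiset.map (fun x : ℝ => x ^ p.toReal) s).sum) h
    simp only [Multiset.map_map] at this
    exact congrArg (· ^ (1 / p.toReal)) this

end VectorNorm

section Schatten

open scoped Matrix.Norms.L2Operator

variable {ι : Type} [Fintype ι] [DecidableEq ι]

/-- The eigenvalues of `aᴴ * a`. -/
def gramEig (a : Matrix ι ι ℂ) : ι → ℝ :=
  (posSemidef_conjTranspose_mul_self a).isHermitian.eigenvalues

lemma gramEig_nonneg (a : Matrix ι ι ℂ) (i : ι) : 0 ≤ gramEig a i :=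
  (posSemidef_conjTranspose_mul_self a).eigenvalues_nonneg i

lemma exists_unitary_gram (a : Matrix ι ι ℂ) : ∃ U : Matrix ι ι ℂ, Uᴴ * U = 1 ∧ U * Uᴴ = 1 ∧
    aᴴ * a = U * diagonal (fun i => (gramEig a i : ℂ)) * Uᴴ := by
  set h := (posSemidef_conjTranspose_mul_self a).isHermitian
  refine ⟨h.eigenvectorUnitary, Unitary.coe_star_mul_self _, Unitary.coe_mul_star_self _, ?_⟩
  conv_lhs => rw [h.spectral_theorem]
  rfl

lemma opNorm_eq_norm (a : Matrix ι ι ℂ) : opNorm a = ‖a‖ := rfl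

lemma norm_unitary_conj {U : Matrix ι ι ℂ} (h : Uᴴ * U = 1) (d : Matrix ι ι ℂ) :
    ‖U * d * Uᴴ‖ = ‖d‖ := by
  have hU : U ∈ unitary (Matrix ι ι ℂ) := ⟨h, mul_eq_one_comm.1 h⟩
  rw [← star_eq_conjTranspose, CStarRing.norm_mul_mem_unitary _ (Unitary.star_mem hU),
    CStarRing.norm_mem_unitary_mul _ hU]

lemma schattenNorm_nonneg (p : ℝ≥0∞) (a : Matrix ι ι ℂ) : 0 ≤ schattenNorm p a := by
  unfold schattenNorm
  split_ifs
  · exact norm_nonneg _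
  · exact Real.rpow_nonneg
      (Finset.sum_nonneg fun i _ => Real.rpow_nonneg (Real.sqrt_nonneg _) _) _

lemma schattenNorm_sq {p : ℝ≥0∞} (hp : p ≠ 0) (a : Matrix ι ι ℂ) :
    schattenNorm (2 * p) a ^ 2 = vecNorm p (gramEig a) := by
  by_cases h : p = ∞
  · subst h
    obtain ⟨U, hU, -, ha⟩ := exists_unitary_gram a
    rw [schattenNorm, if_pos (by simp), vecNorm_top, opNorm_eq_norm, sq,
      ← l2_opNorm_conjTranspose_mul_self, ha, norm_unitary_conj hU, l2_opNorm_diagonal]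
    simp [Pi.norm_def]
  · have hpos := ENNReal.toReal_pos hp h
    rw [schattenNorm, if_neg (by simp [ENNReal.mul_eq_top, h]), vecNorm_of_ne_top h]
    have h2 : (2 * p).toReal = 2 * p.toReal := by simp
    have hs : ∀ x : ℝ, 0 ≤ x → Real.sqrt x ^ (2 * p.toReal) = x ^ p.toReal := by
      intro x hx
      rw [Real.rpow_mul (Real.sqrt_nonneg x), Real.rpow_two, Real.sq_sqrt hx]
    change ((∑ i, Real.sqrt (gramEig a i) ^ (2 * p).toReal) ^ (1 / (2 * p).toReal)) ^ 2 = _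
    rw [h2, Finset.sum_congr rfl fun i _ => hs _ (gramEig_nonneg a i), ← Real.rpow_natCast,
      ← Real.rpow_mul (Finset.sum_nonneg fun i _ => Real.rpow_nonneg (gramEig_nonneg a i) _)]
    congr 1
    push_cast
    field_simp

lemma schattenNorm_eq_of_gramEig {p : ℝ≥0∞} (hp : p ≠ 0) {a b : Matrix ι ι ℂ}
    (h : gramEig a = gramEig b) : schattenNorm (2 * p) a = schattenNorm (2 * p) b := by
  have := schattenNorm_sq hp a
  rw [h, ← schattenNorm_sq hp b] at this
  exact (sq_eq_sq₀ (schattenNorm_nonneg _ _) (schattenNorm_nonneg _ _)).1 this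

lemma gramEig_conjTranspose (a : Matrix ι ι ℂ) : gramEig aᴴ = gramEig a := by
  refine (IsHermitian.eigenvalues_eq_eigenvalues_iff _ _).2 ?_
  rw [charpoly_mul_comm, conjTranspose_conjTranspose]

lemma gramEig_transpose (a : Matrix ι ι ℂ) : gramEig aᵀ = gramEig a := by
  refine (IsHermitian.eigenvalues_eq_eigenvalues_iff _ _).2 ?_
  have : (aᵀ)ᴴ * aᵀ = (a * aᴴ)ᵀ := by
    rw [transpose_mul]; rfl
  rw [this, charpoly_transpose, charpoly_mul_comm]

lemma schattenNorm_conjTranspose {p : ℝ≥0∞} (hp : p ≠ 0) (a : Matrix ι ι ℂ) :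
    schattenNorm (2 * p) aᴴ = schattenNorm (2 * p) a :=
  schattenNorm_eq_of_gramEig hp (gramEig_conjTranspose a)

lemma schattenNorm_transpose {p : ℝ≥0∞} (hp : p ≠ 0) (a : Matrix ι ι ℂ) :
    schattenNorm (2 * p) aᵀ = schattenNorm (2 * p) a :=
  schattenNorm_eq_of_gramEig hp (gramEig_transpose a)

lemma schattenNorm_sq_of_gram_diagonal {p : ℝ≥0∞} (hp : p ≠ 0) {a : Matrix ι ι ℂ} {v : ι → ℝ}
    (h : aᴴ * a = diagonal fun i => (v i : ℂ)) : schattenNorm (2 * p) a ^ 2 = vecNorm p v := by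
  rw [schattenNorm_sq hp]
  have hr := (posSemidef_conjTranspose_mul_self a).isHermitian.roots_charpoly_eq_eigenvalues
  have hd : (aᴴ * a).charpoly.roots = Multiset.map (fun i => (v i : ℂ)) Finset.univ.val := by
    rw [h, charpoly_diagonal, Polynomial.roots_prod _ _
      (Finset.prod_ne_zero_iff.2 fun i _ => Polynomial.X_sub_C_ne_zero _)]
    simp
  rw [hd] at hr
  have hm : Multiset.map v Finset.univ.val = Multiset.map (gramEig a) Finset.univ.val := by
    have := congrArg (Multiset.map Complex.re) hr
    simp only [Multiset.map_map] at this
    exact this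
  exact vecNorm_eq_of_map_eq p hm.symm

/-- Hölder's inequality for Schatten norms. -/
lemma re_trace_mul_le {p q : ℝ≥0∞} (h : p⁻¹ + q⁻¹ = 1) (a b : Matrix ι ι ℂ) :
    (trace (a * aᴴ * (b * bᴴ))).re ≤ schattenNorm (2 * p) a ^ 2 * schattenNorm (2 * q) b ^ 2 := by
  have hp0 : p ≠ 0 := by rintro rfl; simp at h
  have hq0 : q ≠ 0 := by rintro rfl; simp at h
  obtain ⟨U, hU, hU', ha⟩ := exists_unitary_gram aᴴ
  obtain ⟨V, hV, hV', hb⟩ := exists_unitary_gram bᴴ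
  rw [conjTranspose_conjTranspose, gramEig_conjTranspose] at ha hb
  rw [schattenNorm_sq hp0, schattenNorm_sq hq0, ha, hb]
  set W := Uᴴ * V with hW
  have hWW : W * Wᴴ = 1 := by
    rw [hW, conjTranspose_mul, conjTranspose_conjTranspose, Matrix.mul_assoc, ← Matrix.mul_assoc V,
      hV', Matrix.one_mul, hU]
  have hWW' : Wᴴ * W = 1 := mul_eq_one_comm.1 hWW
  have htr : (trace (U * diagonal (fun i => (gramEig a i : ℂ)) * Uᴴ *
      (V * diagonal (fun i => (gramEig b i : ℂ)) * Vᴴ))).re =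
      ∑ i, ∑ j, ‖W i j‖ ^ 2 * (gramEig a i * gramEig b j) := by
    have h1 : U * diagonal (fun i => (gramEig a i : ℂ)) * Uᴴ *
        (V * diagonal (fun i => (gramEig b i : ℂ)) * Vᴴ) =
        U * (diagonal (fun i => (gramEig a i : ℂ)) * W *
          diagonal (fun i => (gramEig b i : ℂ)) * Vᴴ) := by
      simp only [hW, Matrix.mul_assoc]
    have h2 : diagonal (fun i => (gramEig a i : ℂ)) * W *
        diagonal (fun i => (gramEig b i : ℂ)) * Vᴴ * U =
        diagonal (fun i => (gramEig a i : ℂ)) * W *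
        diagonal (fun i => (gramEig b i : ℂ)) * Wᴴ := by
      rw [hW, conjTranspose_mul, conjTranspose_conjTranspose, Matrix.mul_assoc _ Vᴴ U]
    rw [h1, trace_mul_comm, h2, trace, Complex.re_sum]
    refine Finset.sum_congr rfl fun i _ => ?_
    rw [diag_apply, Matrix.mul_apply, Complex.re_sum]
    refine Finset.sum_congr rfl fun j _ => ?_
    rw [mul_diagonal, diagonal_mul, conjTranspose_apply]
    have : (gramEig a i : ℂ) * W i j * (gramEig b j : ℂ) * star (W i j) =
        ((‖W i j‖ ^ 2 * (gramEig a i * gramEig b j) : ℝ) : ℂ) := by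
      have := Complex.mul_conj' (W i j)
      push_cast
      rw [← this]
      simp only [RCLike.star_def]
      ring
    rw [this, Complex.ofReal_re]
  rw [htr]
  have hnorm : ∀ z : ℂ, ((‖z‖ ^ 2 : ℝ) : ℂ) = z * star z := fun z => by
    rw [RCLike.star_def, Complex.mul_conj']; push_cast; rfl
  refine sum_doublyStochastic_le h (gramEig_nonneg a) (gramEig_nonneg b) _
    (fun i j => sq_nonneg _) (fun i => ?_) (fun j => ?_)
  · have := congrFun (congrFun hWW i) i
    rw [Matrix.mul_apply, one_apply_eq] at this
    simp only [conjTranspose_apply, ← hnorm] at this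
    exact_mod_cast this
  · have := congrFun (congrFun hWW' j) j
    rw [Matrix.mul_apply, one_apply_eq] at this
    simp only [conjTranspose_apply, mul_comm (star _), ← hnorm] at this
    exact_mod_cast this

/-- The Schatten norm is attained against the unit ball of the conjugate Schatten norm. -/
lemma exists_schattenNorm_sq_eq_trace {p q : ℝ≥0∞} (h : p⁻¹ + q⁻¹ = 1) (a : Matrix ι ι ℂ) :
    ∃ b : Matrix ι ι ℂ, schattenNorm (2 * q) b ^ 2 ≤ 1 ∧
      trace (a * aᴴ * (b * bᴴ)) = (schattenNorm (2 * p) a ^ 2 : ℝ) := by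
  have hp0 : p ≠ 0 := by rintro rfl; simp at h
  have hq0 : q ≠ 0 := by rintro rfl; simp at h
  obtain ⟨w, hw, hwq, hsum⟩ := exists_vecNorm_eq_sum h (gramEig_nonneg a)
  obtain ⟨U, hU, hU', ha⟩ := exists_unitary_gram aᴴ
  rw [conjTranspose_conjTranspose, gramEig_conjTranspose] at ha
  set D : Matrix ι ι ℂ := diagonal fun i => ((Real.sqrt (w i) : ℝ) : ℂ) with hD
  have hDH : Dᴴ = D := by
    rw [hD, diagonal_conjTranspose]
    congr 1
    ext i
    simp
  have hDD : D * D = diagonal fun i => (w i : ℂ) := by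
    rw [hD, diagonal_mul_diagonal]
    congr 1
    ext i
    rw [← Complex.ofReal_mul, Real.mul_self_sqrt (hw i)]
  refine ⟨U * D, ?_, ?_⟩
  · rwa [schattenNorm_sq_of_gram_diagonal hq0 (v := w)]
    rw [conjTranspose_mul, hDH, Matrix.mul_assoc, ← Matrix.mul_assoc Uᴴ, hU, Matrix.one_mul, hDD]
  · have h1 : a * aᴴ * (U * D * (U * D)ᴴ) =
        U * (diagonal (fun i => (gramEig a i : ℂ)) * diagonal (fun i => (w i : ℂ)) * Uᴴ) := by
      rw [ha, conjTranspose_mul, hDH, ← hDD]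
      simp only [Matrix.mul_assoc]
      rw [← Matrix.mul_assoc Uᴴ U, hU, Matrix.one_mul]
    rw [h1, trace_mul_comm, Matrix.mul_assoc, hU, Matrix.mul_one, diagonal_mul_diagonal,
      trace_diagonal, schattenNorm_sq hp0, ← hsum]
    push_cast
    rfl

end Schatten

section PosSemidef

variable {ι κ : Type}

lemma convex_posSemidef : Convex ℝ {X : Matrix ι ι ℂ | X.PosSemidef} :=
  fun _ hX _ hY _ _ ha hb _ => (hX.smul ha).add (hY.smul hb)

variable [Fintype ι] [Fintype κ]

lemma posSemidef_iff_forall_re {X : Matrix ι ι ℂ} : X.PosSemidef ↔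
    X.IsHermitian ∧ ∀ x : ι → ℂ, 0 ≤ (star x ⬝ᵥ X *ᵥ x).re := by
  refine ⟨fun h => ⟨h.1, fun x => h.re_dotProduct_nonneg x⟩, fun h => ?_⟩
  refine .of_dotProduct_mulVec_nonneg h.1 fun x => ?_
  rw [Complex.le_def]
  exact ⟨h.2 x, (h.1.im_star_dotProduct_mulVec_self x).symm⟩

lemma isClosed_posSemidef : IsClosed {X : Matrix ι ι ℂ | X.PosSemidef} := by
  simp only [posSemidef_iff_forall_re, Set.ofPred_and, Set.ofPred_forall]
  refine (isClosed_eq (by fun_prop) (by fun_prop)).inter (isClosed_iInter fun x => ?_)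
  exact isClosed_le continuous_const (Complex.continuous_re.comp (by fun_prop))

variable [DecidableEq ι]

open scoped MatrixOrder in
lemma exists_eq_mul_conjTranspose {X : Matrix ι ι ℂ} (h : X.PosSemidef) :
    ∃ M : Matrix ι ι ℂ, X = M * Mᴴ := by
  obtain ⟨y, rfl⟩ := CStarAlgebra.nonneg_iff_eq_star_mul_self.mp h.nonneg
  exact ⟨yᴴ, by rw [conjTranspose_conjTranspose]; rfl⟩

/-- A functional that is nonnegative on rank-one projections is a positive trace functional. -/
lemma exists_trace_rep (f : Matrix ι ι ℂ →ₗ[ℂ] ℂ)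
    (hf : ∀ x : ι → ℂ, 0 ≤ (f (vecMulVec x (star x))).re) :
    ∃ M : Matrix ι ι ℂ, ∀ X : Matrix ι ι ℂ, X.IsHermitian →
      (f X).re = (trace (Mᴴ * X * M)).re := by
  set G : Matrix ι ι ℂ := of fun j i => f (Matrix.single i j 1) with hG
  have hfG : ∀ X, f X = trace (G * X) := by
    intro X
    conv_lhs => rw [matrix_eq_sum_single X]
    simp only [map_sum, trace, diag_apply, Matrix.mul_apply]
    rw [Finset.sum_comm]
    refine Finset.sum_congr rfl fun j _ => Finset.sum_congr rfl fun i _ => ?_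
    have : Matrix.single i j (X i j) = X i j • Matrix.single i j (1 : ℂ) := by simp
    rw [this, map_smul, smul_eq_mul, mul_comm]
    rfl
  have hRe : ∀ X : Matrix ι ι ℂ, X.IsHermitian →
      (f X).re = (trace (((1 / 2 : ℝ) • (G + Gᴴ)) * X)).re := by
    intro X hX
    have h1 : trace (Gᴴ * X) = star (trace (G * X)) := by
      rw [← trace_conjTranspose, conjTranspose_mul, hX.eq, trace_mul_comm]
    rw [hfG, Matrix.smul_mul, trace_smul, Matrix.add_mul, trace_add, h1]
    simp
    ring
  have hR : ((1 / 2 : ℝ) • (G + Gᴴ)).PosSemidef := by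
    refine posSemidef_iff_forall_re.2 ⟨?_, fun x => ?_⟩
    · rw [IsHermitian, conjTranspose_smul, conjTranspose_add, conjTranspose_conjTranspose,
        add_comm Gᴴ]
      simp
    · have hx := hf x
      rw [hRe _ (posSemidef_vecMulVec_self_star x).1, mul_vecMulVec, trace_vecMulVec,
        dotProduct_comm] at hx
      exact hx
  obtain ⟨M, hM⟩ := exists_eq_mul_conjTranspose hR
  refine ⟨M, fun X hX => ?_⟩
  rw [hRe X hX, hM, Matrix.mul_assoc, trace_mul_comm]

/-- If `ξ * ξᴴ = A * Aᴴ`, then `ξ` factors through `A` via a partial isometry. -/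
lemma exists_factor {ξ : Matrix ι κ ℂ} {A : Matrix ι ι ℂ} (h : ξ * ξᴴ = A * Aᴴ) :
    ∃ V : Matrix ι κ ℂ, ξ = A * V ∧ V * Vᴴ * (V * Vᴴ) = V * Vᴴ := by
  obtain ⟨U, hU, hU', hA⟩ := exists_unitary_gram Aᴴ
  rw [conjTranspose_conjTranspose] at hA
  set d : ι → ℂ := fun i => (gramEig Aᴴ i : ℂ) with hd
  set G : Matrix ι ι ℂ := U * diagonal (fun i => (d i)⁻¹) * Uᴴ with hG
  have hconj : ∀ e e' : ι → ℂ, U * diagonal e * Uᴴ * (U * diagonal e' * Uᴴ) =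
      U * diagonal (fun i => e i * e' i) * Uᴴ := by
    intro e e'
    rw [← diagonal_mul_diagonal]
    simp only [Matrix.mul_assoc]
    rw [← Matrix.mul_assoc Uᴴ U, hU, Matrix.one_mul]
  have hGH : Gᴴ = G := by
    rw [hG]
    simp only [conjTranspose_mul, conjTranspose_conjTranspose, diagonal_conjTranspose,
      Matrix.mul_assoc]
    congr 3
    ext i
    simp [hd]
  have hSGS : A * Aᴴ * G * (A * Aᴴ) = A * Aᴴ := by
    rw [hA, hG, hconj, hconj]
    congr 3
    ext i
    by_cases hi : d i = 0
    · simp [hi]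
    · field_simp
  have hGSG : G * (A * Aᴴ) * G = G := by
    rw [hA, hG, hconj, hconj]
    congr 3
    ext i
    by_cases hi : d i = 0
    · simp [hi]
    · field_simp
  have hξ : A * Aᴴ * G * ξ = ξ := by
    have h0 : (1 - A * Aᴴ * G) * ξ = 0 := by
      refine self_mul_conjTranspose_eq_zero.1 ?_
      rw [conjTranspose_mul, Matrix.mul_assoc, ← Matrix.mul_assoc ξ, h, ← Matrix.mul_assoc,
        Matrix.sub_mul, Matrix.one_mul, hSGS, sub_self, Matrix.zero_mul]
    rw [Matrix.sub_mul, Matrix.one_mul, sub_eq_zero] at h0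
    exact h0.symm
  have hVV : Aᴴ * G * ξ * (Aᴴ * G * ξ)ᴴ = Aᴴ * G * A := by
    calc _ = Aᴴ * (G * (ξ * ξᴴ) * G) * A := by
          simp only [conjTranspose_mul, conjTranspose_conjTranspose, hGH, Matrix.mul_assoc]
      _ = _ := by rw [h, hGSG]
  refine ⟨Aᴴ * G * ξ, ?_, ?_⟩
  · rw [← Matrix.mul_assoc, ← Matrix.mul_assoc, hξ]
  · rw [hVV]
    calc _ = Aᴴ * (G * (A * Aᴴ) * G) * A := by simp only [Matrix.mul_assoc]
      _ = _ := by rw [hGSG]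

end PosSemidef

section Contraction

open scoped Matrix.Norms.L2Operator

variable {ι κ μ : Type} [Fintype ι] [DecidableEq ι] [Fintype κ] [DecidableEq κ] [Fintype μ]
  [DecidableEq μ]

lemma norm_le_one_of_isIdempotent {V : Matrix ι κ ℂ} (h : V * Vᴴ * (V * Vᴴ) = V * Vᴴ) :
    ‖V‖ ≤ 1 := by
  have h1 : ‖V * Vᴴ‖ = ‖V‖ * ‖V‖ := by
    rw [← l2_opNorm_conjTranspose V, ← l2_opNorm_conjTranspose_mul_self Vᴴ,
      conjTranspose_conjTranspose]
  have h2 : ‖V * Vᴴ‖ = ‖V * Vᴴ‖ * ‖V * Vᴴ‖ := by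
    rw [← l2_opNorm_conjTranspose_mul_self (V * Vᴴ), conjTranspose_mul,
      conjTranspose_conjTranspose, h]
  have h3 := norm_nonneg V
  have h4 := norm_nonneg (V * Vᴴ)
  have h5 : ‖V * Vᴴ‖ ≤ 1 := by nlinarith
  nlinarith

lemma norm_mul_mul_le {V : Matrix ι κ ℂ} (hV : ‖V‖ ≤ 1) (y : Matrix κ μ ℂ) {W : Matrix μ ι ℂ}
    (hW : ‖W‖ ≤ 1) : ‖V * y * W‖ ≤ ‖y‖ := by
  calc ‖V * y * W‖ ≤ ‖V‖ * ‖y‖ * ‖W‖ :=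
        (l2_opNorm_mul _ _).trans (by gcongr; exact l2_opNorm_mul _ _)
    _ ≤ 1 * ‖y‖ * 1 := by gcongr
    _ = ‖y‖ := by ring

lemma norm_kronecker_one_le (y : Matrix ι ι ℂ) :
    ‖y ⊗ₖ (1 : Matrix κ κ ℂ)‖ ≤ ‖y‖ := by
  let F : Matrix ι ι ℂ →⋆ₐ[ℂ] Matrix (ι × κ) (ι × κ) ℂ :=
    { toFun := fun y => y ⊗ₖ (1 : Matrix κ κ ℂ)
      map_one' := one_kronecker_one
      map_mul' := fun a b => by rw [← mul_kronecker_mul, Matrix.one_mul]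
      map_zero' := zero_kronecker _
      map_add' := fun a b => add_kronecker _ _ _
      commutes' := fun r => by
        rw [Algebra.algebraMap_eq_smul_one, Algebra.algebraMap_eq_smul_one, smul_kronecker,
          one_kronecker_one]
      map_star' := fun a => by
        rw [star_eq_conjTranspose, star_eq_conjTranspose, conjTranspose_kronecker,
          conjTranspose_one] }
  exact NonUnitalStarAlgHom.norm_apply_le F y

lemma norm_dotProduct_mulVec_le (y : Matrix ι ι ℂ) (v w : ι → ℂ) :
    ‖v ⬝ᵥ y *ᵥ w‖ ≤ ‖y‖ * Real.sqrt (∑ i, ‖v i‖ ^ 2) * Real.sqrt (∑ i, ‖w i‖ ^ 2) := by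
  have h1 := l2_opNorm_mulVec y (WithLp.toLp 2 w)
  have h2 := norm_inner_le_norm (𝕜 := ℂ) (WithLp.toLp 2 (star v)) (WithLp.toLp 2 (y *ᵥ w))
  rw [EuclideanSpace.inner_toLp_toLp, star_star, dotProduct_comm] at h2
  have h3 : ‖(WithLp.toLp 2 (star v) : EuclideanSpace ℂ ι)‖ = Real.sqrt (∑ i, ‖v i‖ ^ 2) := by
    simp [EuclideanSpace.norm_eq]
  have h4 : ‖(WithLp.toLp 2 w : EuclideanSpace ℂ ι)‖ = Real.sqrt (∑ i, ‖w i‖ ^ 2) := by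
    simp [EuclideanSpace.norm_eq]
  rw [h3] at h2
  rw [h4] at h1
  calc _ ≤ Real.sqrt (∑ i, ‖v i‖ ^ 2) * (‖y‖ * Real.sqrt (∑ i, ‖w i‖ ^ 2)) :=
        h2.trans (by gcongr; exact h1)
    _ = _ := by ring

end Contraction

section DualBall

variable {ι : Type} [Fintype ι]

lemma norm_mul_conjTranspose_apply_le (A : Matrix ι ι ℂ) (i j : ι) :
    ‖(A * Aᴴ) i j‖ ≤ (trace (A * Aᴴ)).re := by
  have htr : ∀ i, ((A * Aᴴ) i i).re = ∑ k, ‖A i k‖ ^ 2 := fun i => by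
    rw [Matrix.mul_apply, Complex.re_sum]
    refine Finset.sum_congr rfl fun k _ => ?_
    rw [conjTranspose_apply, RCLike.star_def, Complex.mul_conj']
    norm_cast
  have hle : ∀ i, ∑ k, ‖A i k‖ ^ 2 ≤ (trace (A * Aᴴ)).re := fun i => by
    rw [trace, Complex.re_sum]
    simp only [diag_apply, htr]
    exact Finset.single_le_sum (f := fun i => ∑ k, ‖A i k‖ ^ 2)
      (fun i _ => Finset.sum_nonneg fun k _ => sq_nonneg _) (Finset.mem_univ i)
  calc ‖(A * Aᴴ) i j‖ ≤ ∑ k, ‖A i k‖ * ‖A j k‖ := by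
        rw [Matrix.mul_apply]
        refine (norm_sum_le _ _).trans (Finset.sum_le_sum fun k _ => ?_)
        rw [norm_mul, conjTranspose_apply, norm_star]
    _ ≤ ∑ k, (‖A i k‖ ^ 2 + ‖A j k‖ ^ 2) / 2 :=
        Finset.sum_le_sum fun k _ => by nlinarith [sq_nonneg (‖A i k‖ - ‖A j k‖)]
    _ = (∑ k, ‖A i k‖ ^ 2 + ∑ k, ‖A j k‖ ^ 2) / 2 := by
        rw [← Finset.sum_div, Finset.sum_add_distrib]
    _ ≤ _ := by linarith [hle i, hle j]

variable [DecidableEq ι]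

/-- The positive matrices whose pairing with the positive unit ball of `S_q` is at most `K`. -/
def dualBall (q : ℝ≥0∞) (K : ℝ) : Set (Matrix ι ι ℂ) :=
  {P | P.PosSemidef ∧ ∀ b : Matrix ι ι ℂ, schattenNorm (2 * q) b ^ 2 ≤ 1 →
    (trace (P * (b * bᴴ))).re ≤ K}

lemma schattenNorm_sq_le_of_mem_dualBall {p q : ℝ≥0∞} (h : p⁻¹ + q⁻¹ = 1) {K : ℝ}
    {A : Matrix ι ι ℂ} (hA : A * Aᴴ ∈ dualBall q K) : schattenNorm (2 * p) A ^ 2 ≤ K := by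
  obtain ⟨b, hb, hAb⟩ := exists_schattenNorm_sq_eq_trace h A
  have := hA.2 b hb
  rwa [hAb, Complex.ofReal_re] at this

lemma smul_mem_dualBall {p q : ℝ≥0∞} (h : p⁻¹ + q⁻¹ = 1) {K : ℝ} (hK : 0 ≤ K)
    {b : Matrix ι ι ℂ} (hb : schattenNorm (2 * p) b ^ 2 ≤ 1) : K • (b * bᴴ) ∈ dualBall q K := by
  refine ⟨(posSemidef_self_mul_conjTranspose b).smul hK, fun c hc => ?_⟩
  rw [Matrix.smul_mul, trace_smul, Complex.smul_re, smul_eq_mul]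
  have := re_trace_mul_le h b c
  have h2 := mul_le_one₀ hb (sq_nonneg _) hc
  nlinarith

lemma convex_dualBall (q : ℝ≥0∞) (K : ℝ) : Convex ℝ (dualBall q K : Set (Matrix ι ι ℂ)) := by
  intro P hP Q hQ s t hs ht hst
  refine ⟨convex_posSemidef hP.1 hQ.1 hs ht hst, fun b hb => ?_⟩
  have h1 := hP.2 b hb
  have h2 := hQ.2 b hb
  rw [Matrix.add_mul, Matrix.smul_mul, Matrix.smul_mul, trace_add, trace_smul, trace_smul,
    Complex.add_re, Complex.smul_re, Complex.smul_re, smul_eq_mul, smul_eq_mul]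
  calc _ ≤ s * K + t * K := by gcongr
    _ = K := by rw [← add_mul, hst, one_mul]

lemma isCompact_dualBall {p q : ℝ≥0∞} (h : p⁻¹ + q⁻¹ = 1) (K : ℝ) :
    IsCompact (dualBall q K : Set (Matrix ι ι ℂ)) := by
  set B := K * schattenNorm (2 * q) (1 : Matrix ι ι ℂ) ^ 2
  have hcpt : IsCompact (Set.univ.pi fun _ : ι => Set.univ.pi fun _ : ι =>
      Metric.closedBall (0 : ℂ) B) :=
    isCompact_univ_pi fun _ => isCompact_univ_pi fun _ => isCompact_closedBall _ _
  have hclosed : IsClosed (dualBall q K : Set (Matrix ι ι ℂ)) := by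
    have : (dualBall q K : Set (Matrix ι ι ℂ)) = {P | P.PosSemidef} ∩
        ⋂ (b : Matrix ι ι ℂ) (_ : schattenNorm (2 * q) b ^ 2 ≤ 1),
          {P | (trace (P * (b * bᴴ))).re ≤ K} := by
      ext P
      simp [dualBall]
    rw [this]
    refine isClosed_posSemidef.inter (isClosed_iInter fun b => isClosed_iInter fun _ => ?_)
    exact isClosed_le (Complex.continuous_re.comp (by fun_prop)) continuous_const
  refine hcpt.of_isClosed_subset hclosed fun P hP i _ j _ => ?_
  obtain ⟨A, rfl⟩ := exists_eq_mul_conjTranspose hP.1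
  rw [mem_closedBall_zero_iff]
  refine (norm_mul_conjTranspose_apply_le A i j).trans ?_
  have h1 := re_trace_mul_le h A 1
  rw [conjTranspose_one, Matrix.mul_one, Matrix.mul_one] at h1
  exact h1.trans (mul_le_mul_of_nonneg_right (schattenNorm_sq_le_of_mem_dualBall h hP)
    (sq_nonneg _))

end DualBall

section PisierDuality

variable {m k : ℕ} {L : Type} [Fintype L]

/-- Regroup a family of tensors in `ℂ^m ⊗ ℂ^k` indexed by `L` as an `m × (k × L)` matrix. -/
def regroup (ξ : Matrix (Fin m × Fin k) L ℂ) : Matrix (Fin m) (Fin k × L) ℂ :=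
  of fun i kl => ξ (i, kl.1) kl.2

lemma trace_kronecker_one_eq (P : Matrix (Fin m) (Fin m) ℂ) (ξ : Matrix (Fin m × Fin k) L ℂ) :
    trace (ξᴴ * (P ⊗ₖ (1 : Matrix (Fin k) (Fin k) ℂ)) * ξ) =
      trace (regroup ξ * (regroup ξ)ᴴ * P) := by
  have h : (P ⊗ₖ (1 : Matrix (Fin k) (Fin k) ℂ)) * ξ = of fun ik l =>
      (P * regroup ξ) ik.1 (ik.2, l) := by
    ext ⟨i, k'⟩ l
    simp [Matrix.mul_apply, Fintype.sum_prod_type, regroup, one_apply]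
  rw [Matrix.mul_assoc, h, trace_mul_comm, Matrix.mul_assoc, trace_mul_comm (regroup ξ),
    Matrix.mul_assoc, trace_mul_comm]
  simp only [trace, diag_apply, mul_apply (M := ξᴴ), of_apply,
    conjTranspose_apply, Fintype.sum_prod_type, regroup]
  rw [Finset.sum_comm]
  refine (Finset.sum_congr rfl fun i _ => Finset.sum_comm).trans ?_
  rw [Finset.sum_comm]
  exact Finset.sum_congr rfl fun i _ => Finset.sum_comm

lemma pisierNorm_le (p : ℝ≥0∞) {x : Matrix (Fin m × Fin k) (Fin m × Fin k) ℂ}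
    (a b : Matrix (Fin m) (Fin m) ℂ) (y : Matrix (Fin m × Fin k) (Fin m × Fin k) ℂ)
    (hx : x = (a ⊗ₖ (1 : Matrix (Fin k) (Fin k) ℂ)) * y * (b ⊗ₖ (1 : Matrix (Fin k) (Fin k) ℂ))) :
    pisierNorm p x ≤ schattenNorm (2 * p) a * opNorm y * schattenNorm (2 * p) b := by
  refine csInf_le ⟨0, ?_⟩ ⟨a, b, y, hx, rfl⟩
  rintro r ⟨a, b, y, -, rfl⟩
  exact mul_nonneg (mul_nonneg (schattenNorm_nonneg _ _) (norm_nonneg _)) (schattenNorm_nonneg _ _)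

open scoped Matrix.Norms.L2Operator in
lemma pisierNorm_le_of_posSemidef {p q : ℝ≥0∞} (h : p⁻¹ + q⁻¹ = 1) {K : ℝ}
    {z : Matrix (Fin m × Fin k) (Fin m × Fin k) ℂ} {P Q : Matrix (Fin m) (Fin m) ℂ}
    (hP : P ∈ dualBall q K) (hQ : Q ∈ dualBall q K)
    (hPQ : (fromBlocks (P ⊗ₖ (1 : Matrix (Fin k) (Fin k) ℂ)) z zᴴ
      (Q ⊗ₖ (1 : Matrix (Fin k) (Fin k) ℂ))).PosSemidef) : pisierNorm p z ≤ K := by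
  have hp0 : p ≠ 0 := by rintro rfl; simp at h
  obtain ⟨A, rfl⟩ := exists_eq_mul_conjTranspose hP.1
  obtain ⟨B, rfl⟩ := exists_eq_mul_conjTranspose hQ.1
  obtain ⟨M, hM⟩ := exists_eq_mul_conjTranspose hPQ
  rw [← fromRows_toRows M, conjTranspose_fromRows_eq_fromCols_conjTranspose,
    fromRows_mul_fromCols, fromBlocks_inj] at hM
  obtain ⟨h11, h12, -, h22⟩ := hM
  have hk : ∀ A : Matrix (Fin m) (Fin m) ℂ, (A * Aᴴ) ⊗ₖ (1 : Matrix (Fin k) (Fin k) ℂ) =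
      (A ⊗ₖ (1 : Matrix (Fin k) (Fin k) ℂ)) * (A ⊗ₖ (1 : Matrix (Fin k) (Fin k) ℂ))ᴴ := fun A => by
    rw [conjTranspose_kronecker, ← mul_kronecker_mul, conjTranspose_one, Matrix.mul_one]
  rw [hk] at h11 h22
  obtain ⟨V, hV, hV1⟩ := exists_factor h11.symm
  obtain ⟨W, hW, hW1⟩ := exists_factor h22.symm
  have hy : ‖V * Wᴴ‖ ≤ 1 := by
    refine (l2_opNorm_mul _ _).trans (mul_le_one₀ (norm_le_one_of_isIdempotent hV1)
      (norm_nonneg _) ?_)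
    rw [l2_opNorm_conjTranspose]
    exact norm_le_one_of_isIdempotent hW1
  have hz := pisierNorm_le p (x := z) A Bᴴ (V * Wᴴ) (by
    rw [h12, hV, hW, conjTranspose_mul, conjTranspose_kronecker, conjTranspose_one]
    simp only [Matrix.mul_assoc])
  rw [schattenNorm_conjTranspose hp0, opNorm_eq_norm] at hz
  have hA := schattenNorm_sq_le_of_mem_dualBall h hP
  have hB := schattenNorm_sq_le_of_mem_dualBall h hQ
  have hA0 := schattenNorm_nonneg (2 * p) A
  have hB0 := schattenNorm_nonneg (2 * p) B
  calc _ ≤ schattenNorm (2 * p) A * 1 * schattenNorm (2 * p) B := hz.trans (by gcongr)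
    _ ≤ K := by nlinarith [sq_nonneg (schattenNorm (2 * p) A - schattenNorm (2 * p) B)]

/-- Duality estimate for `S_p^m[M_k]`. -/
lemma pisierNorm_le_of_dual {p q : ℝ≥0∞} (h : p⁻¹ + q⁻¹ = 1) {K : ℝ} (hK : 0 ≤ K)
    (z : Matrix (Fin m × Fin k) (Fin m × Fin k) ℂ)
    (hz : ∀ (ξ η : Matrix (Fin m × Fin k) ((Fin m × Fin k) ⊕ (Fin m × Fin k)) ℂ)
      (A B : Matrix (Fin m) (Fin m) ℂ), regroup ξ * (regroup ξ)ᴴ = A * Aᴴ →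
      regroup η * (regroup η)ᴴ = B * Bᴴ →
      ‖trace (ξᴴ * z * η)‖ ≤ K * schattenNorm (2 * q) A * schattenNorm (2 * q) B) :
    pisierNorm p z ≤ K := by
  by_contra hcon
  have h' : q⁻¹ + p⁻¹ = 1 := by rwa [add_comm]
  let Φ : Matrix (Fin m) (Fin m) ℂ × Matrix (Fin m) (Fin m) ℂ →
      Matrix ((Fin m × Fin k) ⊕ (Fin m × Fin k)) ((Fin m × Fin k) ⊕ (Fin m × Fin k)) ℂ :=
    fun PQ => fromBlocks (PQ.1 ⊗ₖ (1 : Matrix (Fin k) (Fin k) ℂ)) z zᴴ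
      (PQ.2 ⊗ₖ (1 : Matrix (Fin k) (Fin k) ℂ))
  have hΦ : Continuous Φ := by
    refine Continuous.matrix_fromBlocks ?_ continuous_const continuous_const ?_
    · exact continuous_matrix fun i j => by simp only [kroneckerMap_apply]; fun_prop
    · exact continuous_matrix fun i j => by simp only [kroneckerMap_apply]; fun_prop
  set S := dualBall (ι := Fin m) q K ×ˢ dualBall (ι := Fin m) q K with hS
  have hcpt : IsCompact (Φ '' S) :=
    ((isCompact_dualBall h K).prod (isCompact_dualBall h K)).image hΦ
  have hconv : Convex ℝ (Φ '' S) := by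
    rintro _ ⟨X, hX, rfl⟩ _ ⟨Y, hY, rfl⟩ s t hs ht hst
    refine ⟨s • X + t • Y, ((convex_dualBall q K).prod (convex_dualBall q K)) hX hY hs ht hst, ?_⟩
    have hc : ∀ w : Matrix (Fin m × Fin k) (Fin m × Fin k) ℂ, s • w + t • w = w := fun w => by
      rw [← add_smul, hst, one_smul]
    simp only [Φ, fromBlocks_smul, fromBlocks_add, hc]
    congr 1 <;> simp [add_kronecker, smul_kronecker]
  have hdisj : Disjoint (Φ '' S) {X | X.PosSemidef} := by
    rw [Set.disjoint_left]
    rintro _ ⟨X, hX, rfl⟩ hpos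
    exact hcon (pisierNorm_le_of_posSemidef h hX.1 hX.2 hpos)
  have : LocallyConvexSpace ℝ (Matrix ((Fin m × Fin k) ⊕ (Fin m × Fin k))
      ((Fin m × Fin k) ⊕ (Fin m × Fin k)) ℂ) :=
    inferInstanceAs (LocallyConvexSpace ℝ ((Fin m × Fin k) ⊕ (Fin m × Fin k) →
      (Fin m × Fin k) ⊕ (Fin m × Fin k) → ℂ))
  obtain ⟨f, u, v, hfu, huv, hfv⟩ := RCLike.geometric_hahn_banach_compact_closed (𝕜 := ℂ)
    hconv hcpt convex_posSemidef isClosed_posSemidef hdisj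
  have hv0 : v < 0 := by simpa using hfv 0 PosSemidef.zero
  obtain ⟨M, hM⟩ := exists_trace_rep f.toLinearMap fun x => by
    by_contra! hneg
    change (f (vecMulVec x (star x))).re < 0 at hneg
    have := hfv ((v / (f (vecMulVec x (star x))).re) • vecMulVec x (star x))
      ((posSemidef_vecMulVec_self_star x).smul (div_nonneg_of_nonpos hv0.le hneg.le))
    have hreal : ∀ (c : ℝ) X, RCLike.re (f (c • X)) = c * (f X).re := fun c X => by
      rw [← Complex.coe_smul, map_smul]; simp
    rw [hreal, div_mul_cancel₀ _ hneg.ne] at this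
    exact this.false
  obtain ⟨A, hA⟩ := exists_eq_mul_conjTranspose
    (posSemidef_self_mul_conjTranspose (regroup M.toRows₁))
  obtain ⟨B, hB⟩ := exists_eq_mul_conjTranspose
    (posSemidef_self_mul_conjTranspose (regroup M.toRows₂))
  obtain ⟨a, ha, hAa⟩ := exists_schattenNorm_sq_eq_trace h' A
  obtain ⟨b, hb, hBb⟩ := exists_schattenNorm_sq_eq_trace h' B
  have hlt := hfu _ ⟨(K • (a * aᴴ), K • (b * bᴴ)),
    ⟨smul_mem_dualBall h hK ha, smul_mem_dualBall h hK hb⟩, rfl⟩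
  have hbound := hz _ _ A B hA hB
  have hherm : (Φ (K • (a * aᴴ), K • (b * bᴴ))).IsHermitian := by
    have : ∀ c : Matrix (Fin m) (Fin m) ℂ,
        ((K • (c * cᴴ)) ⊗ₖ (1 : Matrix (Fin k) (Fin k) ℂ)).IsHermitian := fun c =>
      (((posSemidef_self_mul_conjTranspose c).smul hK).kronecker PosSemidef.one).1
    exact IsHermitian.fromBlocks (this a) rfl (this b)
  have hval := hM _ hherm
  have hexp : (trace (Mᴴ * Φ (K • (a * aᴴ), K • (b * bᴴ)) * M)).re =
      K * schattenNorm (2 * q) A ^ 2 + K * schattenNorm (2 * q) B ^ 2 +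
      2 * (trace (M.toRows₁ᴴ * z * M.toRows₂)).re := by
    have hcross : trace (M.toRows₂ᴴ * zᴴ * M.toRows₁) =
        star (trace (M.toRows₁ᴴ * z * M.toRows₂)) := by
      rw [← trace_conjTranspose]
      simp only [conjTranspose_mul, conjTranspose_conjTranspose, Matrix.mul_assoc]
    rw [← Matrix.mul_assoc] at hAa hBb
    conv_lhs => rw [← fromRows_toRows M]
    rw [conjTranspose_fromRows_eq_fromCols_conjTranspose, Matrix.mul_assoc,
      fromBlocks_mul_fromRows, fromCols_mul_fromRows]
    simp only [Matrix.mul_add, ← Matrix.mul_assoc, trace_add, hcross, trace_kronecker_one_eq,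
      hA, hB, Matrix.mul_smul, trace_smul, hAa, hBb]
    simp [-Complex.ofReal_pow]
    ring
  have hre := Complex.abs_re_le_norm (trace (M.toRows₁ᴴ * z * M.toRows₂))
  have hre' := neg_abs_le (trace (M.toRows₁ᴴ * z * M.toRows₂)).re
  rw [hexp] at hval
  change (f.toLinearMap _).re < u at hlt
  rw [hval] at hlt
  nlinarith [mul_nonneg hK (sq_nonneg (schattenNorm (2 * q) A - schattenNorm (2 * q) B))]

end PisierDuality

section TracePairing

lemma le_mul_of_forall_gt {X C A : ℝ} (hA : 0 ≤ A) (h : ∀ s, C < s → X ≤ s * A) : X ≤ C * A := by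
  refine le_of_forall_pos_le_add fun ε hε => (h (C + ε / (A + 1)) ?_).trans ?_
  · have : 0 < ε / (A + 1) := by positivity
    linarith
  · rw [add_mul, div_mul_eq_mul_div]
    gcongr
    rw [div_le_iff₀ (by positivity)]
    nlinarith

lemma exists_pisierNorm_factor {p : ℝ≥0∞} {m k : ℕ}
    {x : Matrix (Fin m × Fin k) (Fin m × Fin k) ℂ} {s : ℝ} (h : pisierNorm p x < s) :
    ∃ (a b : Matrix (Fin m) (Fin m) ℂ) (y : Matrix (Fin m × Fin k) (Fin m × Fin k) ℂ),
      x = (a ⊗ₖ (1 : Matrix (Fin k) (Fin k) ℂ)) * y * (b ⊗ₖ (1 : Matrix (Fin k) (Fin k) ℂ)) ∧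
      schattenNorm (2 * p) a * opNorm y * schattenNorm (2 * p) b < s := by
  rw [pisierNorm] at h
  obtain ⟨_, ⟨a, b, y, hx, rfl⟩, hr⟩ :=
    exists_lt_of_csInf_lt (by exact ⟨_, 1, 1, x, by simp, rfl⟩) h
  exact ⟨a, b, y, hx, hr⟩

variable {n m k : ℕ}

lemma exists_rho_factor {p q : ℝ≥0∞} {a : Matrix (Fin n × Fin m) (Fin n × Fin m) ℂ} {s : ℝ}
    (h : rho p q a < s) :
    ∃ (γ δ : Matrix (Fin n) (Fin n) ℂ) (α β : Matrix (Fin m) (Fin m) ℂ)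
      (g : Matrix (Fin n × Fin m) (Fin n × Fin m) ℂ), a = (γ ⊗ₖ α) * g * (δ ⊗ₖ β) ∧
      schattenNorm (2 * p) γ * schattenNorm (2 * q) α * opNorm g *
          schattenNorm (2 * p) δ * schattenNorm (2 * q) β < s := by
  rw [rho] at h
  obtain ⟨_, ⟨γ, δ, α, β, g, ha, rfl⟩, hr⟩ :=
    exists_lt_of_csInf_lt (by exact ⟨_, 1, 1, 1, 1, a, by simp, rfl⟩) h
  exact ⟨γ, δ, α, β, g, ha, hr⟩

lemma rho_value_nonneg (p q : ℝ≥0∞) (γ δ : Matrix (Fin n) (Fin n) ℂ)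
    (α β : Matrix (Fin m) (Fin m) ℂ) (g : Matrix (Fin n × Fin m) (Fin n × Fin m) ℂ) :
    0 ≤ schattenNorm (2 * p) γ * schattenNorm (2 * q) α * opNorm g *
          schattenNorm (2 * p) δ * schattenNorm (2 * q) β := by
  have h := fun (i : ℕ) (r : ℝ≥0∞) (a : Matrix (Fin i) (Fin i) ℂ) => schattenNorm_nonneg r a
  exact mul_nonneg (mul_nonneg (mul_nonneg (mul_nonneg (h _ _ _) (h _ _ _)) (norm_nonneg _))
    (h _ _ _)) (h _ _ _)

lemma rho_le (p q : ℝ≥0∞) {a : Matrix (Fin n × Fin m) (Fin n × Fin m) ℂ}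
    (γ δ : Matrix (Fin n) (Fin n) ℂ) (α β : Matrix (Fin m) (Fin m) ℂ)
    (g : Matrix (Fin n × Fin m) (Fin n × Fin m) ℂ) (ha : a = (γ ⊗ₖ α) * g * (δ ⊗ₖ β)) :
    rho p q a ≤ schattenNorm (2 * p) γ * schattenNorm (2 * q) α * opNorm g *
          schattenNorm (2 * p) δ * schattenNorm (2 * q) β := by
  refine csInf_le ⟨0, ?_⟩ ⟨γ, δ, α, β, g, ha, rfl⟩
  rintro r ⟨γ, δ, α, β, g, -, rfl⟩
  exact rho_value_nonneg p q γ δ α β g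

lemma opNorm_real_smul {ι : Type} [Fintype ι] [DecidableEq ι] {t : ℝ} (ht : 0 ≤ t)
    (a : Matrix ι ι ℂ) : opNorm (t • a) = t * opNorm a := by
  open scoped Matrix.Norms.L2Operator in
  rw [opNorm_eq_norm, opNorm_eq_norm, norm_smul, Real.norm_of_nonneg ht]

/-- If the `M_n`-valued blocks of `a` are combinations of those of `x`, then the trace pairing
of `(u ⊗ id) a` is the corresponding combination of the entries of `(u ⊗ id) x`. -/
lemma tracePair_amp_eq (u : Matrix (Fin n) (Fin n) ℂ →ₗ[ℂ] Matrix (Fin m) (Fin m) ℂ)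
    {a : Matrix (Fin n × Fin m) (Fin n × Fin m) ℂ} {x : Matrix (Fin n × Fin k) (Fin n × Fin k) ℂ}
    (c : Fin m → Fin m → Fin k → Fin k → ℂ)
    (h : ∀ i j i' j', a (i', i) (j', j) = ∑ k, ∑ l, c i j k l * x (i', k) (j', l)) :
    tracePair (amp u a) = ∑ i, ∑ j, ∑ k, ∑ l, c i j k l * amp u x (i, k) (j, l) := by
  refine Finset.sum_congr rfl fun i _ => Finset.sum_congr rfl fun j _ => ?_
  have hblock : (of fun i' j' => a (i', i) (j', j)) =
      ∑ k, ∑ l, c i j k l • of fun i' j' => x (i', k) (j', l) := by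
    ext i' j'
    simp [h, Matrix.sum_apply]
  simp only [amp, of_apply, hblock, map_sum, map_smul, Matrix.sum_apply, Matrix.smul_apply,
    smul_eq_mul]

lemma tracePair_amp_smul (u : Matrix (Fin n) (Fin n) ℂ →ₗ[ℂ] Matrix (Fin m) (Fin m) ℂ) (t : ℝ)
    (a : Matrix (Fin n × Fin m) (Fin n × Fin m) ℂ) :
    tracePair (amp u (t • a)) = t * tracePair (amp u a) := by
  have hblock : ∀ i j, (of fun i' j' => t • a (i', i) (j', j)) =
      (t : ℂ) • of fun i' j' => a (i', i) (j', j) := fun i j => by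
    ext i' j'
    simp
  simp only [tracePair, amp, of_apply, hblock, map_smul, Matrix.smul_apply, smul_eq_mul,
    Finset.mul_sum]

/-- The `S_2` norm of a product is controlled by conjugate Schatten norms. -/
lemma sqrt_sum_sq_mul_le {p q : ℝ≥0∞} (h : p⁻¹ + q⁻¹ = 1) (c α : Matrix (Fin m) (Fin m) ℂ) :
    Real.sqrt (∑ ik : Fin m × Fin m, ‖(c * α) ik.1 ik.2‖ ^ 2) ≤
      schattenNorm (2 * p) c * schattenNorm (2 * q) α := by
  have hp0 : p ≠ 0 := by rintro rfl; simp at h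
  have hs : ∑ ik : Fin m × Fin m, ‖(c * α) ik.1 ik.2‖ ^ 2 =
      (trace (cᴴ * cᴴᴴ * (α * αᴴ))).re := by
    have : trace (cᴴ * cᴴᴴ * (α * αᴴ)) = trace (c * α * (c * α)ᴴ) := by
      rw [conjTranspose_conjTranspose, Matrix.mul_assoc, trace_mul_comm, conjTranspose_mul]
      simp only [Matrix.mul_assoc]
    rw [this, trace, Complex.re_sum, Fintype.sum_prod_type]
    refine Finset.sum_congr rfl fun i _ => ?_
    rw [diag_apply, Matrix.mul_apply, Complex.re_sum]
    refine Finset.sum_congr rfl fun k _ => ?_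
    rw [conjTranspose_apply, RCLike.star_def, Complex.mul_conj']
    norm_cast
  refine Real.sqrt_le_iff.2 ⟨mul_nonneg (schattenNorm_nonneg _ _) (schattenNorm_nonneg _ _), ?_⟩
  rw [hs, mul_pow]
  simpa only [schattenNorm_conjTranspose hp0] using re_trace_mul_le h cᴴ α

lemma norm_sum_le_pisierNorm {p q : ℝ≥0∞} (h : p⁻¹ + q⁻¹ = 1) (α β : Matrix (Fin m) (Fin m) ℂ)
    (z : Matrix (Fin m × Fin m) (Fin m × Fin m) ℂ) :
    ‖∑ i, ∑ j, ∑ k, ∑ l, α i k * β l j * z (i, k) (j, l)‖ ≤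
      pisierNorm p z * (schattenNorm (2 * q) α * schattenNorm (2 * q) β) := by
  have hp0 : p ≠ 0 := by rintro rfl; simp at h
  have hq0 : q ≠ 0 := by rintro rfl; simp at h
  have hα := schattenNorm_nonneg (2 * q) α
  have hβ := schattenNorm_nonneg (2 * q) β
  refine le_mul_of_forall_gt (by positivity) fun s hs => ?_
  obtain ⟨c, d, y, rfl, hr⟩ := exists_pisierNorm_factor hs
  set v : Fin m × Fin m → ℂ := fun ik => α ik.1 ik.2
  set w : Fin m × Fin m → ℂ := fun jl => β jl.2 jl.1
  have hsum : ∀ z : Matrix (Fin m × Fin m) (Fin m × Fin m) ℂ,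
      ∑ i, ∑ j, ∑ k, ∑ l, α i k * β l j * z (i, k) (j, l) = v ⬝ᵥ z *ᵥ w := fun z => by
    simp only [dotProduct, mulVec, Fintype.sum_prod_type, v, w, Finset.mul_sum]
    refine Finset.sum_congr rfl fun i _ => Finset.sum_comm.trans ?_
    refine Finset.sum_congr rfl fun k _ => Finset.sum_congr rfl fun j _ =>
      Finset.sum_congr rfl fun l _ => by ring
  have hv : v ᵥ* (c ⊗ₖ (1 : Matrix (Fin m) (Fin m) ℂ)) = fun ik => (cᵀ * α) ik.1 ik.2 := by
    ext ⟨i, k⟩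
    simp [vecMul, dotProduct, Fintype.sum_prod_type, v, Matrix.mul_apply, one_apply, mul_comm]
  have hw : (d ⊗ₖ (1 : Matrix (Fin m) (Fin m) ℂ)) *ᵥ w = fun jl => (d * βᵀ) jl.1 jl.2 := by
    ext ⟨i, k⟩
    simp [mulVec, dotProduct, Fintype.sum_prod_type, w, Matrix.mul_apply, one_apply]
  rw [hsum, ← mulVec_mulVec, ← mulVec_mulVec, dotProduct_mulVec, hv, hw]
  have h1 := sqrt_sum_sq_mul_le h cᵀ α
  have h2 := sqrt_sum_sq_mul_le h d βᵀ
  rw [schattenNorm_transpose hp0] at h1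
  rw [schattenNorm_transpose hq0] at h2
  have hy : 0 ≤ opNorm y := norm_nonneg _
  have hc := schattenNorm_nonneg (2 * p) c
  refine (norm_dotProduct_mulVec_le y _ _).trans ?_
  rw [← opNorm_eq_norm]
  calc _ ≤ opNorm y * (schattenNorm (2 * p) c * schattenNorm (2 * q) α) *
        (schattenNorm (2 * p) d * schattenNorm (2 * q) β) := by gcongr
    _ = schattenNorm (2 * p) c * opNorm y * schattenNorm (2 * p) d *
        (schattenNorm (2 * q) α * schattenNorm (2 * q) β) := by ring
    _ ≤ _ := by gcongr

end TracePairing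

section IdTensor

variable {n m k : ℕ} {L : Type}

/-- The matrix `1 ⊗ V`, with its column indices reassociated. -/
def idTensor (n : ℕ) (V : Matrix (Fin m) (Fin k × L) ℂ) :
    Matrix (Fin n × Fin m) ((Fin n × Fin k) × L) ℂ :=
  ((1 : Matrix (Fin n) (Fin n) ℂ) ⊗ₖ V).submatrix id (Equiv.prodAssoc _ _ _)

lemma idTensor_apply (V : Matrix (Fin m) (Fin k × L) ℂ) (i i' : Fin n) (j : Fin m) (k' : Fin k)
    (l : L) : idTensor n V (i, j) ((i', k'), l) = if i = i' then V j (k', l) else 0 := by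
  simp [idTensor, one_apply]

lemma idTensor_mul (A : Matrix (Fin m) (Fin m) ℂ) (V : Matrix (Fin m) (Fin k × L) ℂ) :
    idTensor n (A * V) = ((1 : Matrix (Fin n) (Fin n) ℂ) ⊗ₖ A) * idTensor n V := by
  ext ⟨i, j⟩ ⟨⟨i', k'⟩, l⟩
  simp [Matrix.mul_apply, idTensor_apply, Fintype.sum_prod_type, one_apply]

variable [Fintype L]

lemma trace_conjTranspose_mul_mul (ξ η : Matrix (Fin m × Fin k) L ℂ)
    (z : Matrix (Fin m × Fin k) (Fin m × Fin k) ℂ) :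
    trace (ξᴴ * z * η) = ∑ i, ∑ j, ∑ k, ∑ l,
      (∑ r, (regroup ξ).map star i (k, r) * star ((regroup η).map star j (l, r))) *
        z (i, k) (j, l) := by
  rw [Matrix.mul_assoc, trace_mul_comm, Matrix.mul_assoc]
  simp only [trace, diag_apply, Matrix.mul_apply, conjTranspose_apply, Fintype.sum_prod_type,
    regroup, map_apply, of_apply, star_star]
  refine Finset.sum_congr rfl fun i _ => Finset.sum_comm.trans ?_
  refine Finset.sum_congr rfl fun j _ => Finset.sum_congr rfl fun k _ =>
    Finset.sum_congr rfl fun l _ => ?_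
  rw [mul_comm]
  simp only [mul_comm]

variable [DecidableEq L]

lemma idTensor_mul_kronecker (γ : Matrix (Fin n) (Fin n) ℂ) (V : Matrix (Fin m) (Fin k × L) ℂ) :
    idTensor n V * ((γ ⊗ₖ (1 : Matrix (Fin k) (Fin k) ℂ)) ⊗ₖ (1 : Matrix L L ℂ)) =
      (γ ⊗ₖ (1 : Matrix (Fin m) (Fin m) ℂ)) * idTensor n V := by
  ext ⟨i, j⟩ ⟨⟨i', k'⟩, l⟩
  simp [Matrix.mul_apply, idTensor_apply, Fintype.sum_prod_type, one_apply, mul_comm]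

open scoped Matrix.Norms.L2Operator in
lemma norm_idTensor_le_one {V : Matrix (Fin m) (Fin k × L) ℂ} (h : V * Vᴴ * (V * Vᴴ) = V * Vᴴ) :
    ‖idTensor n V‖ ≤ 1 := by
  refine norm_le_one_of_isIdempotent ?_
  have : idTensor n V * (idTensor n V)ᴴ = (1 : Matrix (Fin n) (Fin n) ℂ) ⊗ₖ (V * Vᴴ) := by
    rw [idTensor, conjTranspose_submatrix, submatrix_mul_equiv, conjTranspose_kronecker,
      ← mul_kronecker_mul, submatrix_id_id, conjTranspose_one, Matrix.one_mul]
  rw [this, ← mul_kronecker_mul, h, Matrix.one_mul]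

lemma idTensor_mul_mul_idTensor_apply (V W : Matrix (Fin m) (Fin k × L) ℂ)
    (x : Matrix (Fin n × Fin k) (Fin n × Fin k) ℂ) (i j : Fin m) (i' j' : Fin n) :
    (idTensor n V * (x ⊗ₖ (1 : Matrix L L ℂ)) * (idTensor n W)ᴴ) (i', i) (j', j) =
      ∑ k, ∑ l, (∑ r, V i (k, r) * star (W j (l, r))) * x (i', k) (j', l) := by
  have hleft : ∀ (l : Fin k) (r : L) (j'' : Fin n),
      (idTensor n V * (x ⊗ₖ (1 : Matrix L L ℂ))) (i', i) ((j'', l), r) =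
        ∑ k', V i (k', r) * x (i', k') (j'', l) := fun l r j'' => by
    simp [Matrix.mul_apply, Fintype.sum_prod_type, idTensor_apply, one_apply]
  rw [Matrix.mul_apply]
  simp only [Fintype.sum_prod_type, hleft, conjTranspose_apply, idTensor_apply]
  simp only [apply_ite, star_zero, mul_zero]
  rw [Finset.sum_comm]
  refine (Finset.sum_congr rfl fun l _ => Finset.sum_comm.trans ?_).trans Finset.sum_comm
  simp only [Finset.sum_ite_eq, Finset.mem_univ, if_true, Finset.sum_mul]
  rw [Finset.sum_comm]
  exact Finset.sum_congr rfl fun k _ => Finset.sum_congr rfl fun r _ => by ring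

/-- Amplifying a factorization through `A * V` and `B * W`. -/
lemma idTensor_mul_mul_idTensor (γ δ : Matrix (Fin n) (Fin n) ℂ) (A B : Matrix (Fin m) (Fin m) ℂ)
    (V W : Matrix (Fin m) (Fin k × L) ℂ) (y : Matrix (Fin n × Fin k) (Fin n × Fin k) ℂ) :
    idTensor n (A * V) * (((γ ⊗ₖ (1 : Matrix (Fin k) (Fin k) ℂ)) * y *
      (δ ⊗ₖ (1 : Matrix (Fin k) (Fin k) ℂ))) ⊗ₖ (1 : Matrix L L ℂ)) * (idTensor n (B * W))ᴴ =
      (γ ⊗ₖ A) * (idTensor n V * (y ⊗ₖ (1 : Matrix L L ℂ)) * (idTensor n W)ᴴ) * (δ ⊗ₖ Bᴴ) := by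
  have hsplit : ((γ ⊗ₖ (1 : Matrix (Fin k) (Fin k) ℂ)) * y *
      (δ ⊗ₖ (1 : Matrix (Fin k) (Fin k) ℂ))) ⊗ₖ (1 : Matrix L L ℂ) =
      ((γ ⊗ₖ (1 : Matrix (Fin k) (Fin k) ℂ)) ⊗ₖ (1 : Matrix L L ℂ)) * (y ⊗ₖ (1 : Matrix L L ℂ)) *
        ((δ ⊗ₖ (1 : Matrix (Fin k) (Fin k) ℂ)) ⊗ₖ (1 : Matrix L L ℂ)) := by
    rw [← mul_kronecker_mul, ← mul_kronecker_mul, Matrix.one_mul, Matrix.one_mul]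
  have hδ := congrArg conjTranspose (idTensor_mul_kronecker δᴴ W)
  simp only [conjTranspose_mul, conjTranspose_kronecker, conjTranspose_conjTranspose,
    conjTranspose_one] at hδ
  calc _ = ((1 : Matrix (Fin n) (Fin n) ℂ) ⊗ₖ A) *
        (idTensor n V * ((γ ⊗ₖ (1 : Matrix (Fin k) (Fin k) ℂ)) ⊗ₖ (1 : Matrix L L ℂ))) *
        (y ⊗ₖ (1 : Matrix L L ℂ)) *
        (((δ ⊗ₖ (1 : Matrix (Fin k) (Fin k) ℂ)) ⊗ₖ (1 : Matrix L L ℂ)) * (idTensor n W)ᴴ) *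
        ((1 : Matrix (Fin n) (Fin n) ℂ) ⊗ₖ Bᴴ) := by
        rw [idTensor_mul, idTensor_mul, conjTranspose_mul, conjTranspose_kronecker,
          conjTranspose_one, hsplit]
        simp only [Matrix.mul_assoc]
    _ = ((1 : Matrix (Fin n) (Fin n) ℂ) ⊗ₖ A * (γ ⊗ₖ (1 : Matrix (Fin m) (Fin m) ℂ))) *
        (idTensor n V * (y ⊗ₖ (1 : Matrix L L ℂ)) * (idTensor n W)ᴴ) *
        ((δ ⊗ₖ (1 : Matrix (Fin m) (Fin m) ℂ)) * (1 : Matrix (Fin n) (Fin n) ℂ) ⊗ₖ Bᴴ) := by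
        rw [idTensor_mul_kronecker, hδ]
        simp only [Matrix.mul_assoc]
    _ = _ := by
        rw [← mul_kronecker_mul, ← mul_kronecker_mul]
        simp only [Matrix.one_mul, Matrix.mul_one]

end IdTensor

section Duality

variable {n m : ℕ} (u : Matrix (Fin n) (Fin n) ℂ →ₗ[ℂ] Matrix (Fin m) (Fin m) ℂ)

lemma norm_tracePair_le_of_regular {p q : ℝ≥0∞} (h : p⁻¹ + q⁻¹ = 1) {C : ℝ} (hC : 0 ≤ C)
    (hu : ∀ x : Matrix (Fin n × Fin m) (Fin n × Fin m) ℂ, pisierNorm p x ≤ 1 →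
      pisierNorm p (amp u x) ≤ C)
    {a : Matrix (Fin n × Fin m) (Fin n × Fin m) ℂ} (ha : rho p q a ≤ 1) :
    ‖tracePair (amp u a)‖ ≤ C := by
  rw [← one_mul C]
  refine le_mul_of_forall_gt hC fun s hs => ?_
  obtain ⟨γ, δ, α, β, g, rfl, hr⟩ := exists_rho_factor (ha.trans_lt hs)
  have hγ := schattenNorm_nonneg (2 * p) γ
  have hδ := schattenNorm_nonneg (2 * p) δ
  have hα := schattenNorm_nonneg (2 * q) α
  have hβ := schattenNorm_nonneg (2 * q) β
  have hg : 0 ≤ opNorm g := norm_nonneg _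
  set x := (γ ⊗ₖ (1 : Matrix (Fin m) (Fin m) ℂ)) * g * (δ ⊗ₖ (1 : Matrix (Fin m) (Fin m) ℂ))
    with hx
  have hfac : (γ ⊗ₖ α) * g * (δ ⊗ₖ β) = ((1 : Matrix (Fin n) (Fin n) ℂ) ⊗ₖ α) * x *
      ((1 : Matrix (Fin n) (Fin n) ℂ) ⊗ₖ β) := by
    have h1 : γ ⊗ₖ α = ((1 : Matrix (Fin n) (Fin n) ℂ) ⊗ₖ α) *
        (γ ⊗ₖ (1 : Matrix (Fin m) (Fin m) ℂ)) := by
      rw [← mul_kronecker_mul, Matrix.one_mul, Matrix.mul_one]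
    have h2 : δ ⊗ₖ β = (δ ⊗ₖ (1 : Matrix (Fin m) (Fin m) ℂ)) *
        ((1 : Matrix (Fin n) (Fin n) ℂ) ⊗ₖ β) := by
      rw [← mul_kronecker_mul, Matrix.one_mul, Matrix.mul_one]
    rw [h1, h2, hx]
    simp only [Matrix.mul_assoc]
  have hentry : ∀ (i j : Fin m) (i' j' : Fin n),
      ((γ ⊗ₖ α) * g * (δ ⊗ₖ β)) (i', i) (j', j) =
        ∑ k, ∑ l, α i k * β l j * x (i', k) (j', l) := fun i j i' j' => by
    rw [hfac]
    simp [Matrix.mul_apply, Fintype.sum_prod_type, one_apply, Finset.sum_mul]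
    rw [Finset.sum_comm]
    exact Finset.sum_congr rfl fun k _ => Finset.sum_congr rfl fun l _ => by ring
  have hle : ‖tracePair (amp u ((γ ⊗ₖ α) * g * (δ ⊗ₖ β)))‖ ≤
      schattenNorm (2 * p) γ * opNorm g * schattenNorm (2 * p) δ *
        (C * (schattenNorm (2 * q) α * schattenNorm (2 * q) β)) := by
    refine le_mul_of_forall_gt (by positivity) fun t ht => ?_
    have ht0 : 0 < t := lt_of_le_of_lt (by positivity) ht
    have hxt : pisierNorm p (t⁻¹ • x) ≤ 1 := by
      refine (pisierNorm_le p γ δ (t⁻¹ • g) ?_).trans ?_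
      · rw [Matrix.mul_smul, Matrix.smul_mul]
      · rw [opNorm_real_smul (by positivity)]
        calc _ = t⁻¹ * (schattenNorm (2 * p) γ * opNorm g * schattenNorm (2 * p) δ) := by ring
          _ ≤ t⁻¹ * t := by gcongr
          _ = 1 := inv_mul_cancel₀ ht0.ne'
    have hscale : (γ ⊗ₖ α) * g * (δ ⊗ₖ β) = t • (t⁻¹ • ((γ ⊗ₖ α) * g * (δ ⊗ₖ β))) := by
      rw [smul_smul, mul_inv_cancel₀ ht0.ne', one_smul]
    rw [hscale, tracePair_amp_smul,
      tracePair_amp_eq u (x := t⁻¹ • x) (fun i j k l => α i k * β l j), norm_mul, Complex.norm_real, Real.norm_of_nonneg ht0.le]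
    · gcongr
      refine (norm_sum_le_pisierNorm h α β _).trans ?_
      gcongr
      exact hu _ hxt
    · intro i j i' j'
      rw [Matrix.smul_apply, hentry, Finset.smul_sum]
      refine Finset.sum_congr rfl fun k _ => ?_
      rw [Finset.smul_sum]
      exact Finset.sum_congr rfl fun l _ => by rw [Matrix.smul_apply, mul_smul_comm]
  calc _ ≤ _ := hle
    _ = schattenNorm (2 * p) γ * schattenNorm (2 * q) α * opNorm g *
          schattenNorm (2 * p) δ * schattenNorm (2 * q) β * C := by ring
    _ ≤ s * C := by gcongr

lemma norm_tracePair_le_of_factor {p q : ℝ≥0∞} {C : ℝ} (hC : 0 ≤ C)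
    (hu : ∀ a : Matrix (Fin n × Fin m) (Fin n × Fin m) ℂ, rho p q a ≤ 1 →
      ‖tracePair (amp u a)‖ ≤ C) (γ δ : Matrix (Fin n) (Fin n) ℂ) (α β : Matrix (Fin m) (Fin m) ℂ)
    (g : Matrix (Fin n × Fin m) (Fin n × Fin m) ℂ) :
    ‖tracePair (amp u ((γ ⊗ₖ α) * g * (δ ⊗ₖ β)))‖ ≤
      schattenNorm (2 * p) γ * schattenNorm (2 * q) α * opNorm g *
          schattenNorm (2 * p) δ * schattenNorm (2 * q) β * C := by
  refine le_mul_of_forall_gt hC fun t ht => ?_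
  have ht0 : 0 < t := lt_of_le_of_lt (rho_value_nonneg p q γ δ α β g) ht
  have hat : rho p q (t⁻¹ • ((γ ⊗ₖ α) * g * (δ ⊗ₖ β))) ≤ 1 := by
    refine (rho_le p q γ δ α β (t⁻¹ • g) ?_).trans ?_
    · rw [Matrix.mul_smul, Matrix.smul_mul]
    · rw [opNorm_real_smul (by positivity)]
      calc _ = t⁻¹ * (schattenNorm (2 * p) γ * schattenNorm (2 * q) α * opNorm g *
            schattenNorm (2 * p) δ * schattenNorm (2 * q) β) := by ring
        _ ≤ t⁻¹ * t := by gcongr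
        _ = 1 := inv_mul_cancel₀ ht0.ne'
  have := hu _ hat
  rwa [tracePair_amp_smul, norm_mul, Complex.norm_real, Real.norm_of_nonneg (by positivity),
    inv_mul_le_iff₀ ht0] at this

open scoped Matrix.Norms.L2Operator in
lemma pisierNorm_amp_le {p q : ℝ≥0∞} (h : p⁻¹ + q⁻¹ = 1) {C : ℝ} (hC : 0 ≤ C)
    (hu : ∀ a : Matrix (Fin n × Fin m) (Fin n × Fin m) ℂ, rho p q a ≤ 1 →
      ‖tracePair (amp u a)‖ ≤ C)
    {k : ℕ} {x : Matrix (Fin n × Fin k) (Fin n × Fin k) ℂ} (hx : pisierNorm p x ≤ 1) :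
    pisierNorm p (amp u x) ≤ C := by
  have hq0 : q ≠ 0 := by rintro rfl; simp at h
  rw [← one_mul C]
  refine le_mul_of_forall_gt hC fun s hs => ?_
  obtain ⟨γ, δ, y, rfl, hr⟩ := exists_pisierNorm_factor (hx.trans_lt hs)
  have hγ := schattenNorm_nonneg (2 * p) γ
  have hδ := schattenNorm_nonneg (2 * p) δ
  have hy : 0 ≤ opNorm y := norm_nonneg _
  have hs0 : 0 ≤ s := zero_le_one.trans hs.le
  refine pisierNorm_le_of_dual h (by positivity) _ fun ξ η A B hA hB => ?_
  obtain ⟨V, hV, hVi⟩ := exists_factor hA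
  obtain ⟨W, hW, hWi⟩ := exists_factor hB
  set x := (γ ⊗ₖ (1 : Matrix (Fin k) (Fin k) ℂ)) * y * (δ ⊗ₖ (1 : Matrix (Fin k) (Fin k) ℂ))
    with hx'
  have hmap : ∀ {V : Matrix (Fin m) (Fin k × ((Fin m × Fin k) ⊕ (Fin m × Fin k))) ℂ},
      V * Vᴴ * (V * Vᴴ) = V * Vᴴ → V.map star * (V.map star)ᴴ * (V.map star * (V.map star)ᴴ) =
        V.map star * (V.map star)ᴴ := fun {V} hV => by
    have hVV : V.map star * (V.map star)ᴴ = (V * Vᴴ)ᵀ := by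
      ext i j
      simp [Matrix.mul_apply, mul_comm]
    rw [hVV, ← transpose_mul, hV]
  set g : Matrix (Fin n × Fin m) (Fin n × Fin m) ℂ := idTensor n (V.map star) *
    (y ⊗ₖ (1 : Matrix ((Fin m × Fin k) ⊕ (Fin m × Fin k)) ((Fin m × Fin k) ⊕ (Fin m × Fin k)) ℂ)) *
      (idTensor n (W.map star))ᴴ with hg
  have hgy : opNorm g ≤ opNorm y := by
    rw [opNorm_eq_norm, opNorm_eq_norm]
    refine (norm_mul_mul_le (norm_idTensor_le_one (hmap hVi)) _ ?_).trans (norm_kronecker_one_le y)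
    rw [l2_opNorm_conjTranspose]
    exact norm_idTensor_le_one (hmap hWi)
  have hconjmul : ∀ (A : Matrix (Fin m) (Fin m) ℂ)
      (V : Matrix (Fin m) (Fin k × ((Fin m × Fin k) ⊕ (Fin m × Fin k))) ℂ),
      (A * V).map star = Aᴴᵀ * V.map star := fun A V => by
    ext i j
    simp [Matrix.mul_apply]
  have hB' : (Bᴴᵀ)ᴴ = Bᵀ := by
    ext i j
    simp
  have hfac := idTensor_mul_mul_idTensor γ δ Aᴴᵀ Bᴴᵀ (V.map star) (W.map star) y
  rw [← hconjmul, ← hconjmul, ← hV, ← hW, hB'] at hfac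
  have htrace : trace (ξᴴ * amp u x * η) = tracePair (amp u ((γ ⊗ₖ Aᴴᵀ) * g * (δ ⊗ₖ Bᵀ))) := by
    rw [← hfac, tracePair_amp_eq u _ fun i j i' j' =>
      idTensor_mul_mul_idTensor_apply _ _ x i j i' j']
    exact trace_conjTranspose_mul_mul ξ η _
  rw [htrace]
  refine (norm_tracePair_le_of_factor u hC hu γ δ Aᴴᵀ Bᵀ g).trans ?_
  rw [schattenNorm_transpose hq0, schattenNorm_transpose hq0, schattenNorm_conjTranspose hq0]
  have hA0 := schattenNorm_nonneg (2 * q) A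
  have hB0 := schattenNorm_nonneg (2 * q) B
  calc _ ≤ schattenNorm (2 * p) γ * schattenNorm (2 * q) A * opNorm y *
          schattenNorm (2 * p) δ * schattenNorm (2 * q) B * C := by gcongr
    _ = schattenNorm (2 * p) γ * opNorm y * schattenNorm (2 * p) δ * C *
          schattenNorm (2 * q) A * schattenNorm (2 * q) B := by ring
    _ ≤ _ := by gcongr

end Duality

end RegularNorm

/-- Theorem 3.2: `(X_p^{nm})^* = B_r(S_p^n, S_p^m)` isometrically, i.e. the regular norm of
`u` equals its norm as a linear functional on `(M_n ⊗ M_m, ρ_p)` under the trace pairing. -/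
theorem regNorm_eq_dual_rho {n m : ℕ} (hn : 1 ≤ n) (hm : 1 ≤ m) (p q : ℝ≥0∞) (hp : 1 ≤ p)
    (hpq : p⁻¹ + q⁻¹ = 1)
    (u : Matrix (Fin n) (Fin n) ℂ →ₗ[ℂ] Matrix (Fin m) (Fin m) ℂ) :
    regNorm p (⇑u) = ⨆ (a : Matrix (Fin n × Fin m) (Fin n × Fin m) ℂ) (_ : rho p q a ≤ 1),
      ENNReal.ofReal ‖tracePair (amp (⇑u) a)‖ := by
  obtain ⟨k, rfl⟩ : ∃ k, m = k + 1 := ⟨m - 1, by omega⟩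
  apply le_antisymm
  · set R := ⨆ (a : Matrix (Fin n × Fin (k + 1)) (Fin n × Fin (k + 1)) ℂ) (_ : rho p q a ≤ 1),
      ENNReal.ofReal ‖tracePair (amp (⇑u) a)‖ with hR
    by_cases htop : R = ∞
    · rw [htop]
      exact le_top
    refine iSup_le fun l => iSup₂_le fun x hx => ?_
    rw [← ENNReal.ofReal_toReal htop]
    refine ENNReal.ofReal_le_ofReal (pisierNorm_amp_le u hpq ENNReal.toReal_nonneg ?_ hx)
    intro a ha
    rw [← ENNReal.ofReal_le_iff_le_toReal htop, hR]
    exact le_iSup₂ (f := fun (a : Matrix (Fin n × Fin (k + 1)) (Fin n × Fin (k + 1)) ℂ)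
      (_ : rho p q a ≤ 1) => ENNReal.ofReal ‖tracePair (amp (⇑u) a)‖) a ha
  · by_cases htop : regNorm p u = ∞
    · rw [htop]
      exact le_top
    refine iSup₂_le fun a ha => ?_
    rw [← ENNReal.ofReal_toReal htop]
    refine ENNReal.ofReal_le_ofReal
      (norm_tracePair_le_of_regular u hpq ENNReal.toReal_nonneg ?_ ha)
    intro x hx
    rw [← ENNReal.ofReal_le_iff_le_toReal htop, regNorm]
    exact (le_iSup₂ (f := fun (x : Matrix (Fin n × Fin (k + 1)) (Fin n × Fin (k + 1)) ℂ)
      (_ : pisierNorm p x ≤ 1) => ENNReal.ofReal (pisierNorm p (amp u x))) x hx).trans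
      (le_iSup (fun l => ⨆ (x : Matrix (Fin n × Fin (l + 1)) (Fin n × Fin (l + 1)) ℂ)
        (_ : pisierNorm p x ≤ 1), ENNReal.ofReal (pisierNorm p (amp u x))) k)
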